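/- Let S ⊂ ℝ^k be a halfspace, Σ an additive subgroup of ℝ^k, and G ∈ (AP^k_Σ)^{m×n} with m < n (respectively, m > n). Then G admits a left (AP_S)_Σ factorization with factorization indices λ_1, …, λ_p (p = max{m,n}) if and only if G can be augmented by n−m additional rows (respectively, m−n additional columns) with entries in AP^k_Σ to a square p×p matrix function that admits a left (AP_S)_Σ factorization with the same indices. In particular, G admits a canonical (AP_S)_Σ factorization if and only if G can be augmented to a square matrix function admitting a canonical (AP_S)_Σ factorization. -/

import Mathlib

/- Almost periodic functions of `k` real variables, their Bohr-Fourier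
coefficients and spectra, the Wiener algebra, and halfspaces. -/

open MeasureTheory Filter BoundedContinuousFunction

noncomputable section

/-- The Banach algebra of bounded continuous functions `ℝ^k → ℂ` (sup norm). -/
abbrev APB (k : ℕ) := BoundedContinuousFunction (Fin k → ℝ) ℂ

/-- The elementary exponential `e_λ(x) = e^{i⟨λ,x⟩}` as a bounded continuous function. -/
def apExp (k : ℕ) (lam : Fin k → ℝ) : APB k :=
  BoundedContinuousFunction.ofNormedAddCommGroup
    (fun x => Complex.exp (Complex.I * ((∑ j, lam j * x j : ℝ) : ℂ)))
    (by fun_prop) 1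
    (fun x => by
      simp [Complex.norm_exp, Complex.mul_re])

/-- `AP^k`: the closed subalgebra of `L^∞`-type bounded continuous functions
generated by all exponentials `e_λ`, `λ ∈ ℝ^k`. -/
def APalg (k : ℕ) : Subalgebra ℂ (APB k) :=
  (Algebra.adjoin ℂ (Set.range (apExp k))).topologicalClosure

/-- The Bohr-Fourier coefficient
`f_λ = lim_{T→∞} (2T)^{-k} ∫_{[-T,T]^k} e^{-i⟨λ,x⟩} f(x) dx`. -/
def bohrCoeff (k : ℕ) (f : (Fin k → ℝ) → ℂ) (lam : Fin k → ℝ) : ℂ :=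
  limUnder atTop (fun T : ℝ =>
    (((2 * T) ^ k : ℝ) : ℂ)⁻¹ *
      ∫ x in Set.Icc (fun _ => -T : Fin k → ℝ) (fun _ => T),
        Complex.exp (-(Complex.I * ((∑ j, lam j * x j : ℝ) : ℂ))) * f x)

/-- The Bohr-Fourier spectrum `σ(f) = {λ : f_λ ≠ 0}`. -/
def bohrSpectrum (k : ℕ) (f : (Fin k → ℝ) → ℂ) : Set (Fin k → ℝ) :=
  {lam | bohrCoeff k f lam ≠ 0}

/-- Membership in `AP^k_Δ = {f ∈ AP^k : σ(f) ⊆ Δ}`. -/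
def APmem (k : ℕ) (Δ : Set (Fin k → ℝ)) (f : APB k) : Prop :=
  f ∈ APalg k ∧ bohrSpectrum k ⇑f ⊆ Δ

/-- Membership in the Wiener algebra `APW^k_Δ`: almost periodic with spectrum
in `Δ` and absolutely convergent Bohr-Fourier series. -/
def APWmem (k : ℕ) (Δ : Set (Fin k → ℝ)) (f : APB k) : Prop :=
  APmem k Δ f ∧ Summable (fun lam => ‖bohrCoeff k (⇑f) lam‖)

/-- The Wiener norm `‖f‖_W = ∑_λ |f_λ|`. -/
def wienerNorm (k : ℕ) (f : (Fin k → ℝ) → ℂ) : ℝ :=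
  ∑' lam, ‖bohrCoeff k f lam‖

/-- A halfspace `S ⊂ ℝ^k`: `ℝ^k = S ∪ (-S)`, `S ∩ (-S) = {0}`, and `S` is
closed under addition and under multiplication by nonnegative reals. -/
structure IsHalfspace (k : ℕ) (S : Set (Fin k → ℝ)) : Prop where
  union : S ∪ -S = Set.univ
  inter : S ∩ -S = {0}
  add_mem : ∀ x ∈ S, ∀ y ∈ S, x + y ∈ S
  smul_mem : ∀ x ∈ S, ∀ a : ℝ, 0 ≤ a → a • x ∈ S

/- Left `(AP_S)_Σ` and `(APW_S)_Σ` factorizations of rectangular almost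
periodic matrix functions. -/

/-- `G = G⁺ · diag(e_{λ_1},…,e_{λ_p}) · G⁻` is a left `(AP_S)_Σ` factorization
of `G` with factorization indices `lam`: the entries of `G⁺` lie in
`AP^k_{Σ∩S}` and `G⁺` is right invertible over `AP^k_{Σ∩S}`, the entries of
`G⁻` lie in `AP^k_{Σ∩(-S)}` and `G⁻` is left invertible over `AP^k_{Σ∩(-S)}`,
and all indices lie in `Σ`. -/
def IsAPFactorization (k : ℕ) {m n p : ℕ} (S Sg : Set (Fin k → ℝ))
    (G : Matrix (Fin m) (Fin n) (APB k)) (lam : Fin p → (Fin k → ℝ))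
    (Gp : Matrix (Fin m) (Fin p) (APB k)) (Gm : Matrix (Fin p) (Fin n) (APB k)) : Prop :=
  (∀ i j, APmem k (Sg ∩ S) (Gp i j)) ∧
  (∀ i j, APmem k (Sg ∩ (-S)) (Gm i j)) ∧
  (∀ j, lam j ∈ Sg) ∧
  (∃ Gpr : Matrix (Fin p) (Fin m) (APB k),
      (∀ i j, APmem k (Sg ∩ S) (Gpr i j)) ∧ Gp * Gpr = 1) ∧
  (∃ Gml : Matrix (Fin n) (Fin p) (APB k),
      (∀ i j, APmem k (Sg ∩ (-S)) (Gml i j)) ∧ Gml * Gm = 1) ∧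
  G = Gp * Matrix.diagonal (fun j => apExp k (lam j)) * Gm

/-- A left `(APW_S)_Σ` factorization: as `IsAPFactorization`, with the Wiener
algebra `APW` in place of `AP` throughout. -/
def IsAPWFactorization (k : ℕ) {m n p : ℕ} (S Sg : Set (Fin k → ℝ))
    (G : Matrix (Fin m) (Fin n) (APB k)) (lam : Fin p → (Fin k → ℝ))
    (Gp : Matrix (Fin m) (Fin p) (APB k)) (Gm : Matrix (Fin p) (Fin n) (APB k)) : Prop :=
  (∀ i j, APWmem k (Sg ∩ S) (Gp i j)) ∧
  (∀ i j, APWmem k (Sg ∩ (-S)) (Gm i j)) ∧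
  (∀ j, lam j ∈ Sg) ∧
  (∃ Gpr : Matrix (Fin p) (Fin m) (APB k),
      (∀ i j, APWmem k (Sg ∩ S) (Gpr i j)) ∧ Gp * Gpr = 1) ∧
  (∃ Gml : Matrix (Fin n) (Fin p) (APB k),
      (∀ i j, APWmem k (Sg ∩ (-S)) (Gml i j)) ∧ Gml * Gm = 1) ∧
  G = Gp * Matrix.diagonal (fun j => apExp k (lam j)) * Gm

/-! ### Exponentials -/

theorem apExp_apply (k : ℕ) (lam x : Fin k → ℝ) :
    apExp k lam x = Complex.exp (Complex.I * ((∑ j, lam j * x j : ℝ) : ℂ)) := rfl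

theorem apExp_zero (k : ℕ) : apExp k 0 = 1 := by
  ext x
  simp [apExp_apply]

theorem apExp_add (k : ℕ) (a b : Fin k → ℝ) : apExp k (a + b) = apExp k a * apExp k b := by
  ext x
  simp only [BoundedContinuousFunction.mul_apply, apExp_apply, ← Complex.exp_add, Pi.add_apply,
    add_mul, Finset.sum_add_distrib, Complex.ofReal_add, mul_add]

theorem norm_apExp_apply (k : ℕ) (lam x : Fin k → ℝ) : ‖apExp k lam x‖ = 1 := by
  rw [apExp_apply, mul_comm, Complex.norm_exp_ofReal_mul_I]

theorem norm_apExp_le (k : ℕ) (lam : Fin k → ℝ) : ‖apExp k lam‖ ≤ 1 :=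
  (BoundedContinuousFunction.norm_le zero_le_one).2 fun x => (norm_apExp_apply k lam x).le

theorem apExp_neg_left_apply_mul (k : ℕ) (lam x y : Fin k → ℝ) :
    apExp k (-lam) y * apExp k lam x = apExp k lam (x - y) := by
  simp only [apExp_apply, ← Complex.exp_add, ← mul_add, ← Complex.ofReal_add,
    ← Finset.sum_add_distrib, Pi.neg_apply, Pi.sub_apply]
  congr 4
  ext j
  ring

theorem apExp_apply_sub (k : ℕ) (a b x : Fin k → ℝ) :
    apExp k (a - b) x = apExp k a x * star (apExp k b x) := by
  simp only [apExp_apply, RCLike.star_def, ← Complex.exp_conj, ← Complex.exp_add]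
  congr 1
  simp [Finset.sum_sub_distrib, sub_mul]
  ring

theorem apExp_mem_APalg (k : ℕ) (lam : Fin k → ℝ) : apExp k lam ∈ APalg k :=
  Subalgebra.le_topologicalClosure _ (Algebra.subset_adjoin ⟨lam, rfl⟩)

/-- The set of exponentials with frequencies in an additive submonoid spans a subalgebra. -/
theorem adjoin_apExp_eq_span (k : ℕ) (Δ : AddSubmonoid (Fin k → ℝ)) :
    Subalgebra.toSubmodule (Algebra.adjoin ℂ (apExp k '' Δ)) =
      Submodule.span ℂ (apExp k '' Δ) := by
  rw [Algebra.adjoin_eq_span]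
  congr 1
  refine (Submonoid.closure_eq_of_le (S := ⟨⟨apExp k '' Δ, ?_⟩, ?_⟩) le_rfl
    Submonoid.subset_closure).symm ▸ rfl
  · rintro _ _ ⟨a, ha, rfl⟩ ⟨b, hb, rfl⟩
    exact ⟨a + b, Δ.add_mem ha hb, apExp_add k a b⟩
  · exact ⟨0, Δ.zero_mem, apExp_zero k⟩

/-- The closed subalgebra generated by the exponentials with frequencies in `Δ`. -/
def apClosure (k : ℕ) (Δ : AddSubmonoid (Fin k → ℝ)) : Subalgebra ℂ (APB k) :=
  (Algebra.adjoin ℂ (apExp k '' Δ)).topologicalClosure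

theorem mem_apClosure_iff (k : ℕ) (Δ : AddSubmonoid (Fin k → ℝ)) (f : APB k) :
    f ∈ apClosure k Δ ↔
      ∀ ε > 0, ∃ p ∈ Submodule.span ℂ (apExp k '' Δ), ‖f - p‖ < ε := by
  rw [← adjoin_apExp_eq_span]
  change f ∈ closure (Algebra.adjoin ℂ (apExp k '' Δ) : Set (APB k)) ↔ _
  simp [Metric.mem_closure_iff, dist_eq_norm]

theorem APalg_eq_apClosure_top (k : ℕ) : APalg k = apClosure k ⊤ := by
  simp [APalg, apClosure]

theorem apExp_mem_apClosure (k : ℕ) (Δ : AddSubmonoid (Fin k → ℝ)) {lam : Fin k → ℝ}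
    (h : lam ∈ Δ) : apExp k lam ∈ apClosure k Δ :=
  Subalgebra.le_topologicalClosure _ (Algebra.subset_adjoin ⟨lam, h, rfl⟩)

/-! ### Means over boxes -/

/-- The average of a function over the box `[-T,T]^k`. -/
def boxMean (k : ℕ) (T : ℝ) (f : (Fin k → ℝ) → ℂ) : ℂ :=
  (((2 * T) ^ k : ℝ) : ℂ)⁻¹ *
    ∫ x in Set.Icc (fun _ => -T : Fin k → ℝ) (fun _ => T), f x

theorem integrableOn_box (k : ℕ) (T : ℝ) (f : APB k) :
    IntegrableOn f (Set.Icc (fun _ => -T : Fin k → ℝ) (fun _ => T)) :=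
  f.continuous.continuousOn.integrableOn_compact isCompact_Icc

theorem boxMean_add (k : ℕ) (T : ℝ) (f g : APB k) :
    boxMean k T ⇑(f + g) = boxMean k T f + boxMean k T g := by
  simp only [boxMean, BoundedContinuousFunction.coe_add, Pi.add_apply]
  rw [integral_add (integrableOn_box k T f) (integrableOn_box k T g), mul_add]

theorem boxMean_smul (k : ℕ) (T : ℝ) (c : ℂ) (f : APB k) :
    boxMean k T ⇑(c • f) = c * boxMean k T f := by
  simp only [boxMean, BoundedContinuousFunction.coe_smul, smul_eq_mul]
  rw [integral_const_mul, mul_left_comm]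

theorem boxMean_sub (k : ℕ) (T : ℝ) (f g : APB k) :
    boxMean k T ⇑(f - g) = boxMean k T f - boxMean k T g := by
  simp only [boxMean, BoundedContinuousFunction.coe_sub, Pi.sub_apply]
  rw [integral_sub (integrableOn_box k T f) (integrableOn_box k T g), mul_sub]

theorem norm_boxMean_le_re (k : ℕ) {T : ℝ} (hT : 0 < T) (f h : APB k)
    (hfh : ∀ x, ‖f x‖ ≤ (h x).re) : ‖boxMean k T f‖ ≤ (boxMean k T h).re := by
  have hpos : (0 : ℝ) ≤ ((2 * T) ^ k)⁻¹ := by positivity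
  rw [boxMean, boxMean, ← Complex.ofReal_inv, Complex.re_ofReal_mul, norm_mul, Complex.norm_real,
    Real.norm_of_nonneg hpos]
  refine mul_le_mul_of_nonneg_left ?_ hpos
  have hre : (∫ x in Set.Icc (fun _ => -T : Fin k → ℝ) (fun _ => T), h x).re =
      ∫ x in Set.Icc (fun _ => -T : Fin k → ℝ) (fun _ => T), (h x).re :=
    (integral_re (integrableOn_box k T h)).symm
  rw [hre]
  refine (norm_integral_le_integral_norm _).trans ?_
  exact integral_mono (integrableOn_box k T f).norm (integrableOn_box k T h).re hfh

theorem boxMean_apExp (k : ℕ) (T : ℝ) (lam : Fin k → ℝ) :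
    boxMean k T (apExp k lam) =
      ∏ j, (((2 * T : ℝ) : ℂ)⁻¹ *
        ∫ x in Set.Icc (-T) T, Complex.exp (Complex.I * ((lam j * x : ℝ) : ℂ))) := by
  rw [boxMean, Finset.prod_mul_distrib, ← integral_fintype_prod_eq_prod,
    ← Measure.restrict_pi_pi, Set.pi_univ_Icc]
  simp only [Finset.prod_const, Finset.card_univ, Fintype.card_fin, inv_pow, apExp_apply,
    Complex.ofReal_sum, Finset.mul_sum, Complex.exp_sum, Complex.ofReal_pow, volume_pi]

theorem boxMean_one (k : ℕ) {T : ℝ} (hT : 0 < T) : boxMean k T (apExp k 0) = 1 := by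
  rw [boxMean_apExp]
  refine Finset.prod_eq_one fun j _ => ?_
  have hT0 : (T : ℂ) ≠ 0 := by exact_mod_cast hT.ne'
  simp only [Pi.zero_apply, zero_mul, Complex.ofReal_zero, mul_zero, Complex.exp_zero]
  rw [setIntegral_const]
  simp [Measure.real, hT.le, ← two_mul]
  field_simp

theorem norm_boxMean_le (k : ℕ) {T : ℝ} (hT : 0 < T) (f : APB k) : ‖boxMean k T f‖ ≤ ‖f‖ := by
  refine (norm_boxMean_le_re k hT f ((‖f‖ : ℂ) • apExp k 0) fun x => ?_).trans ?_
  · simpa [apExp_zero] using f.norm_coe_le_norm x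
  · rw [boxMean_smul, boxMean_one k hT]
    simp

theorem tendsto_boxMean_apExp (k : ℕ) (lam : Fin k → ℝ) :
    Tendsto (fun T => boxMean k T (apExp k lam)) atTop (nhds (if lam = 0 then 1 else 0)) := by
  split_ifs with h
  · subst h
    refine tendsto_const_nhds.congr' ?_
    filter_upwards [eventually_gt_atTop 0] with T hT
    exact (boxMean_one k hT).symm
  · obtain ⟨j₀, hj₀⟩ : ∃ j, lam j ≠ 0 := by
      by_contra! h'
      exact h (funext h')
    refine squeeze_zero_norm' (a := fun T : ℝ => |T|⁻¹ * |lam j₀|⁻¹) ?_ ?_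
    · filter_upwards [eventually_gt_atTop 0] with T hT
      rw [boxMean_apExp, norm_prod, ← Finset.mul_prod_erase _ _ (Finset.mem_univ j₀)]
      refine (mul_le_of_le_one_right (norm_nonneg _) ?_).trans ?_
      · refine Finset.prod_le_one (fun _ _ => norm_nonneg _) fun j _ => ?_
        have hb : ‖∫ x in Set.Icc (-T) T, Complex.exp (Complex.I * ((lam j * x : ℝ) : ℂ))‖ ≤
            1 * volume.real (Set.Icc (-T) T) := by
          refine norm_setIntegral_le_of_norm_le_const (by simp) fun x _ => ?_
          rw [mul_comm, Complex.norm_exp_ofReal_mul_I]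
        have hv : volume.real (Set.Icc (-T) T) = 2 * T := by
          rw [Real.volume_real_Icc_of_le (by linarith)]
          ring
        rw [hv, one_mul] at hb
        rw [norm_mul, norm_inv, Complex.norm_real, Real.norm_of_nonneg (by positivity),
          inv_mul_le_iff₀ (by positivity), mul_one]
        exact hb
      · have hc : Complex.I * (lam j₀ : ℂ) ≠ 0 := by simp [hj₀]
        have he : ∫ x in Set.Icc (-T) T, Complex.exp (Complex.I * ((lam j₀ * x : ℝ) : ℂ)) =
            (Complex.exp (Complex.I * lam j₀ * (T : ℝ)) -
              Complex.exp (Complex.I * lam j₀ * ((-T : ℝ) : ℂ))) / (Complex.I * lam j₀) := by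
          rw [integral_Icc_eq_integral_Ioc, ← intervalIntegral.integral_of_le (by linarith),
            ← integral_exp_mul_complex hc]
          simp [mul_assoc]
        have hn : ∀ y : ℝ, ‖Complex.exp (Complex.I * lam j₀ * (y : ℂ))‖ = 1 := fun y => by
          rw [mul_assoc, mul_comm, ← Complex.ofReal_mul, Complex.norm_exp_ofReal_mul_I]
        have hs := norm_sub_le (Complex.exp (Complex.I * lam j₀ * (T : ℝ)))
          (Complex.exp (Complex.I * lam j₀ * ((-T : ℝ) : ℂ)))
        rw [hn, hn] at hs
        rw [he, norm_mul, norm_inv, norm_div, norm_mul, Complex.norm_I, one_mul,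
          Complex.norm_real, Complex.norm_real, Real.norm_eq_abs, Real.norm_eq_abs, abs_mul,
          abs_two, mul_inv, div_eq_mul_inv]
        have h1 : 0 ≤ |T|⁻¹ * |lam j₀|⁻¹ := by positivity
        nlinarith
    · have := (tendsto_inv_atTop_zero.comp tendsto_abs_atTop_atTop).mul_const |lam j₀|⁻¹
      simpa using this

theorem exists_tendsto_boxMean (k : ℕ) {f : APB k} (hf : f ∈ APalg k) :
    ∃ c, Tendsto (fun T => boxMean k T f) atTop (nhds c) := by
  rw [APalg_eq_apClosure_top, mem_apClosure_iff] at hf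
  have hspan : ∀ p ∈ Submodule.span ℂ (apExp k '' (⊤ : AddSubmonoid (Fin k → ℝ))),
      ∃ c, Tendsto (fun T => boxMean k T p) atTop (nhds c) := by
    intro p hp
    induction hp using Submodule.span_induction with
    | mem x hx =>
      obtain ⟨lam, -, rfl⟩ := hx
      exact ⟨_, tendsto_boxMean_apExp k lam⟩
    | zero => exact ⟨0, by simp [boxMean]⟩
    | add x y _ _ hx hy =>
      obtain ⟨a, ha⟩ := hx
      obtain ⟨b, hb⟩ := hy
      exact ⟨a + b, by simpa only [boxMean_add] using ha.add hb⟩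
    | smul c x _ hx =>
      obtain ⟨a, ha⟩ := hx
      exact ⟨c * a, by simpa only [boxMean_smul] using ha.const_mul c⟩
  refine cauchySeq_tendsto_of_complete (Metric.cauchySeq_iff'.2 fun ε hε => ?_)
  obtain ⟨p, hp, hfp⟩ := hf (ε / 3) (by positivity)
  obtain ⟨c, hc⟩ := hspan p hp
  obtain ⟨N', hN'⟩ := Metric.cauchySeq_iff.1 hc.cauchySeq (ε / 3) (by positivity)
  refine ⟨max N' 1, fun T hT => ?_⟩
  have key : ∀ T ≥ max N' 1, ‖boxMean k T f - boxMean k T p‖ < ε / 3 := fun T hT => by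
    rw [← boxMean_sub]
    exact (norm_boxMean_le k (lt_of_lt_of_le one_pos ((le_max_right _ _).trans hT)) _).trans_lt hfp
  have h1 := key T hT
  have h2 := key (max N' 1) le_rfl
  have h3 := hN' T ((le_max_left _ _).trans hT) (max N' 1) (le_max_left _ _)
  rw [← dist_eq_norm] at h1 h2
  calc dist (boxMean k T f) (boxMean k (max N' 1) f)
      ≤ dist (boxMean k T f) (boxMean k T p) + dist (boxMean k T p) (boxMean k (max N' 1) p) +
        dist (boxMean k (max N' 1) p) (boxMean k (max N' 1) f) := dist_triangle4 _ _ _ _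
    _ < ε / 3 + ε / 3 + ε / 3 := by
        rw [dist_comm (boxMean k (max N' 1) p)]
        gcongr
    _ = ε := by ring

/-! ### Bohr-Fourier coefficients -/

theorem tendsto_bohrCoeff (k : ℕ) {f : APB k} (hf : f ∈ APalg k) (lam : Fin k → ℝ) :
    Tendsto (fun T => boxMean k T ⇑(apExp k (-lam) * f)) atTop (nhds (bohrCoeff k f lam)) := by
  have := tendsto_nhds_limUnder
    (exists_tendsto_boxMean k ((APalg k).mul_mem (apExp_mem_APalg k (-lam)) hf))
  convert this using 2
  simp [bohrCoeff, boxMean, apExp_apply]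

theorem bohrCoeff_sub (k : ℕ) {f g : APB k} (hf : f ∈ APalg k) (hg : g ∈ APalg k)
    (lam : Fin k → ℝ) :
    bohrCoeff k ⇑(f - g) lam = bohrCoeff k f lam - bohrCoeff k g lam := by
  refine tendsto_nhds_unique (tendsto_bohrCoeff k ((APalg k).sub_mem hf hg) lam) ?_
  simpa only [mul_sub, boxMean_sub] using
    (tendsto_bohrCoeff k hf lam).sub (tendsto_bohrCoeff k hg lam)

theorem bohrCoeff_add (k : ℕ) {f g : APB k} (hf : f ∈ APalg k) (hg : g ∈ APalg k)
    (lam : Fin k → ℝ) :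
    bohrCoeff k ⇑(f + g) lam = bohrCoeff k f lam + bohrCoeff k g lam := by
  refine tendsto_nhds_unique (tendsto_bohrCoeff k ((APalg k).add_mem hf hg) lam) ?_
  simpa only [mul_add, boxMean_add] using
    (tendsto_bohrCoeff k hf lam).add (tendsto_bohrCoeff k hg lam)

theorem bohrCoeff_smul (k : ℕ) {f : APB k} (hf : f ∈ APalg k) (c : ℂ) (lam : Fin k → ℝ) :
    bohrCoeff k ⇑(c • f) lam = c * bohrCoeff k f lam := by
  refine tendsto_nhds_unique (tendsto_bohrCoeff k ((APalg k).smul_mem hf c) lam) ?_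
  simpa only [mul_smul_comm, boxMean_smul] using (tendsto_bohrCoeff k hf lam).const_mul c

theorem bohrCoeff_apExp (k : ℕ) (mu lam : Fin k → ℝ) :
    bohrCoeff k (apExp k mu) lam = if lam = mu then 1 else 0 := by
  refine tendsto_nhds_unique (tendsto_bohrCoeff k (apExp_mem_APalg k mu) lam) ?_
  simpa only [← apExp_add, neg_add_eq_zero] using tendsto_boxMean_apExp k (-lam + mu)

theorem norm_bohrCoeff_le (k : ℕ) {f : APB k} (hf : f ∈ APalg k) (lam : Fin k → ℝ) :
    ‖bohrCoeff k f lam‖ ≤ ‖f‖ := by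
  refine le_of_tendsto (tendsto_bohrCoeff k hf lam).norm ?_
  filter_upwards [eventually_gt_atTop 0] with T hT
  refine (norm_boxMean_le k hT _).trans ((norm_mul_le _ _).trans ?_)
  exact mul_le_of_le_one_left (norm_nonneg _) (norm_apExp_le k _)

theorem APalg_of_mem_span (k : ℕ) {Δ : Set (Fin k → ℝ)} {p : APB k}
    (hp : p ∈ Submodule.span ℂ (apExp k '' Δ)) : p ∈ APalg k := by
  have : Submodule.span ℂ (apExp k '' Δ) ≤ Subalgebra.toSubmodule (APalg k) := by
    rw [Submodule.span_le]
    rintro _ ⟨lam, -, rfl⟩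
    exact apExp_mem_APalg k lam
  exact this hp

theorem bohrCoeff_eq_zero_of_mem_span (k : ℕ) {Δ : Set (Fin k → ℝ)} {p : APB k}
    (hp : p ∈ Submodule.span ℂ (apExp k '' Δ)) {lam : Fin k → ℝ} (hlam : lam ∉ Δ) :
    bohrCoeff k p lam = 0 := by
  induction hp using Submodule.span_induction with
  | mem x hx =>
    obtain ⟨mu, hmu, rfl⟩ := hx
    rw [bohrCoeff_apExp, if_neg]
    rintro rfl
    exact hlam hmu
  | zero =>
    have := bohrCoeff_smul k (apExp_mem_APalg k 0) 0 lam
    simpa using this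
  | add x y hx hy hx' hy' =>
    rw [bohrCoeff_add k (APalg_of_mem_span k hx) (APalg_of_mem_span k hy), hx', hy', add_zero]
  | smul c x hx hx' => rw [bohrCoeff_smul k (APalg_of_mem_span k hx), hx', mul_zero]

/-! ### Følner sets in commutative groups -/

/-- A finite subset of a commutative group has an almost invariant finite set. -/
theorem exists_almost_invariant {E : Type*} [AddCommGroup E] [DecidableEq E] (s : Finset E)
    {ε : ℝ} (hε : 0 < ε) :
    ∃ F : Finset E, F.Nonempty ∧
      ∀ a ∈ s, (1 - ε) * (F.card : ℝ) ≤ ((F.filter fun b => b + a ∈ F).card : ℝ) := by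
  classical
  let Φ : ℕ → Finset E := fun n =>
    (Fintype.piFinset fun _ : s => Finset.range n).image fun c => ∑ i : s, c i • (i : E)
  have hcard : ∀ n, (Φ n).card ≤ n ^ s.card := fun n =>
    Finset.card_image_le.trans (by simp [Fintype.card_piFinset])
  have hsub : ∀ n, Φ n ⊆ Φ (n + 1) := fun n =>
    Finset.image_subset_image (Fintype.piFinset_subset _ _ fun _ =>
      Finset.range_subset_range.2 n.le_succ)
  have hzero : (0 : E) ∈ Φ 1 :=
    Finset.mem_image.2 ⟨fun _ => 0, Fintype.mem_piFinset.2 fun _ => by simp, by simp⟩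
  have hne : ∀ n, (Φ (n + 1)).Nonempty := fun n => by
    induction n with
    | zero => exact ⟨0, hzero⟩
    | succ n ih => exact ih.mono (hsub _)
  have hadd : ∀ n, ∀ a ∈ s, ∀ b ∈ Φ n, b + a ∈ Φ (n + 1) := by
    intro n a ha b hb
    obtain ⟨c, hc, rfl⟩ := Finset.mem_image.1 hb
    refine Finset.mem_image.2 ⟨c + Pi.single ⟨a, ha⟩ 1, ?_, ?_⟩
    · simp only [Fintype.mem_piFinset, Finset.mem_range, Pi.add_apply] at hc ⊢
      intro i
      have := hc i
      by_cases h : i = ⟨a, ha⟩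
      · subst h
        simpa using this
      · simp [Pi.single_eq_of_ne h]
        omega
    · simp only [Pi.add_apply, add_smul, Finset.sum_add_distrib]
      congr 1
      rw [Finset.sum_eq_single ⟨a, ha⟩]
      · simp
      · intro i _ hi
        simp [Pi.single_eq_of_ne hi]
      · simp
  obtain ⟨n, hn⟩ : ∃ n, ((Φ (n + 2)).card : ℝ) ≤ (1 + ε) * (Φ (n + 1)).card := by
    by_contra! hcon
    have hgrow : ∀ n, (1 + ε) ^ n ≤ ((Φ (n + 1)).card : ℝ) := fun n => by
      induction n with
      | zero => simpa using (hne 0).card_pos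
      | succ n ih =>
        calc (1 + ε) ^ (n + 1) = (1 + ε) * (1 + ε) ^ n := by ring
          _ ≤ (1 + ε) * (Φ (n + 1)).card := by gcongr
          _ ≤ _ := (hcon n).le
    have ht := (tendsto_add_atTop_iff_nat 1).2
      (tendsto_pow_const_div_const_pow_of_one_lt s.card (by linarith : 1 < 1 + ε))
    obtain ⟨n, hn⟩ := (ht.eventually_lt_const (show (0 : ℝ) < (1 + ε)⁻¹ by positivity)).exists
    have h1 : (1 + ε) ^ n ≤ ((n + 1 : ℕ) : ℝ) ^ s.card :=
      (hgrow n).trans (by exact_mod_cast hcard (n + 1))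
    rw [div_lt_iff₀ (by positivity), pow_succ', inv_mul_cancel_left₀ (by positivity)] at hn
    linarith
  refine ⟨Φ (n + 1), hne n, fun a ha => ?_⟩
  have himg : ((Φ (n + 1)).filter fun b => b + a ∈ Φ (n + 1)).card =
      ((Φ (n + 1)).image (· + a) ∩ Φ (n + 1)).card := by
    rw [← Finset.card_image_of_injective _ (add_left_injective a)]
    congr 1
    ext x
    simp only [Finset.mem_image, Finset.mem_filter, Finset.mem_inter]
    constructor
    · rintro ⟨b, ⟨hb, hb'⟩, rfl⟩
      exact ⟨⟨b, hb, rfl⟩, hb'⟩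
    · rintro ⟨⟨b, hb, rfl⟩, hb'⟩
      exact ⟨b, ⟨hb, hb'⟩, rfl⟩
  have hunion : ((Φ (n + 1)).image (· + a) ∪ Φ (n + 1)).card ≤ (Φ (n + 2)).card := by
    refine Finset.card_le_card (Finset.union_subset ?_ (hsub _))
    intro x hx
    obtain ⟨b, hb, rfl⟩ := Finset.mem_image.1 hx
    exact hadd _ a ha b hb
  have hsum := Finset.card_union_add_card_inter ((Φ (n + 1)).image (· + a)) (Φ (n + 1))
  rw [Finset.card_image_of_injective _ (add_left_injective a)] at hsum
  rw [himg]
  have hsum' : ((((Φ (n + 1)).image (· + a) ∪ Φ (n + 1)).card : ℝ) +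
      ((Φ (n + 1)).image (· + a) ∩ Φ (n + 1)).card) =
      (Φ (n + 1)).card + (Φ (n + 1)).card := by exact_mod_cast hsum
  have hunion' : (((Φ (n + 1)).image (· + a) ∪ Φ (n + 1)).card : ℝ) ≤ (Φ (n + 2)).card := by
    exact_mod_cast hunion
  linarith

/-! ### Bochner-Fejér approximation -/

/-- The Bochner-Fejér sum of `f` associated with a finite set `F` of frequencies: the mean
convolution of `f` with the nonnegative kernel `|F|⁻¹ |∑_{a ∈ F} e_a|²`. -/
def fejerSum (k : ℕ) (F : Finset (Fin k → ℝ)) (f : APB k) : APB k :=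
  (F.card : ℂ)⁻¹ • ∑ a ∈ F, ∑ b ∈ F, bohrCoeff k f (a - b) • apExp k (a - b)

theorem fejerSum_mem_span (k : ℕ) (F : Finset (Fin k → ℝ)) (f : APB k) {Δ : Set (Fin k → ℝ)}
    (hf : bohrSpectrum k f ⊆ Δ) : fejerSum k F f ∈ Submodule.span ℂ (apExp k '' Δ) := by
  refine Submodule.smul_mem _ _ (Submodule.sum_mem _ fun a _ => Submodule.sum_mem _ fun b _ => ?_)
  by_cases h : bohrCoeff k f (a - b) = 0
  · simp [h]
  · exact Submodule.smul_mem _ _ (Submodule.subset_span ⟨_, hf h, rfl⟩)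

theorem fejerSum_sub (k : ℕ) (F : Finset (Fin k → ℝ)) {f g : APB k} (hf : f ∈ APalg k)
    (hg : g ∈ APalg k) : fejerSum k F (f - g) = fejerSum k F f - fejerSum k F g := by
  simp only [fejerSum, bohrCoeff_sub k hf hg, sub_smul, Finset.sum_sub_distrib, smul_sub]

theorem fejerSum_add (k : ℕ) (F : Finset (Fin k → ℝ)) {f g : APB k} (hf : f ∈ APalg k)
    (hg : g ∈ APalg k) : fejerSum k F (f + g) = fejerSum k F f + fejerSum k F g := by
  simp only [fejerSum, bohrCoeff_add k hf hg, add_smul, Finset.sum_add_distrib, smul_add]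

theorem fejerSum_smul (k : ℕ) (F : Finset (Fin k → ℝ)) {f : APB k} (hf : f ∈ APalg k) (c : ℂ) :
    fejerSum k F (c • f) = c • fejerSum k F f := by
  simp only [fejerSum, bohrCoeff_smul k hf, mul_smul, Finset.smul_sum, smul_comm c]

theorem fejerSum_apExp (k : ℕ) (F : Finset (Fin k → ℝ)) (lam : Fin k → ℝ) :
    fejerSum k F (apExp k lam) =
      ((F.card : ℂ)⁻¹ * ((F.filter fun b => b + lam ∈ F).card : ℂ)) • apExp k lam := by
  classical
  rw [fejerSum, mul_smul, Finset.sum_comm]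
  congr 1
  have : ∀ b ∈ F, (∑ a ∈ F, bohrCoeff k (apExp k lam) (a - b) • apExp k (a - b)) =
      if b + lam ∈ F then apExp k lam else 0 := fun b _ => by
    simp only [bohrCoeff_apExp, sub_eq_iff_eq_add, ite_smul, one_smul, zero_smul, add_comm lam b]
    rw [Finset.sum_ite_eq']
    simp
  rw [Finset.sum_congr rfl this, ← Finset.sum_filter, Finset.sum_const, Nat.cast_smul_eq_nsmul]

/-- The nonnegative kernel `y ↦ |F|⁻¹ |∑_{a ∈ F} e_a(x - y)|²`, written as a trigonometric
polynomial in `y`. -/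
def fejerKernel (k : ℕ) (F : Finset (Fin k → ℝ)) (x : Fin k → ℝ) : APB k :=
  (F.card : ℂ)⁻¹ • ∑ a ∈ F, ∑ b ∈ F, apExp k (a - b) x • apExp k (-(a - b))

theorem fejerKernel_apply (k : ℕ) (F : Finset (Fin k → ℝ)) (x y : Fin k → ℝ) :
    fejerKernel k F x y =
      (((F.card : ℝ)⁻¹ * ‖∑ a ∈ F, apExp k a (x - y)‖ ^ 2 : ℝ) : ℂ) := by
  have h : ((‖∑ a ∈ F, apExp k a (x - y)‖ ^ 2 : ℝ) : ℂ) =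
      ∑ a ∈ F, ∑ b ∈ F, apExp k (a - b) (x - y) := by
    rw [Complex.ofReal_pow, ← Complex.mul_conj', map_sum, Finset.sum_mul_sum]
    simp only [apExp_apply_sub, RCLike.star_def]
  rw [Complex.ofReal_mul, h, fejerKernel]
  simp only [BoundedContinuousFunction.coe_smul, BoundedContinuousFunction.coe_sum,
    Finset.sum_apply, smul_eq_mul, Complex.ofReal_inv, Complex.ofReal_natCast]
  congr 1
  refine Finset.sum_congr rfl fun a _ => Finset.sum_congr rfl fun b _ => ?_
  rw [mul_comm, apExp_neg_left_apply_mul]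

theorem boxMean_sum (k : ℕ) (T : ℝ) {ι : Type*} (s : Finset ι) (f : ι → APB k) :
    boxMean k T ⇑(∑ i ∈ s, f i) = ∑ i ∈ s, boxMean k T (f i) := by
  classical
  induction s using Finset.induction_on with
  | empty => simp [boxMean]
  | insert i s hi ih => rw [Finset.sum_insert hi, Finset.sum_insert hi, boxMean_add, ih]

theorem tendsto_boxMean_fejerKernel_mul (k : ℕ) (F : Finset (Fin k → ℝ)) (x : Fin k → ℝ)
    {f : APB k} (hf : f ∈ APalg k) :
    Tendsto (fun T => boxMean k T ⇑(fejerKernel k F x * f)) atTop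
      (nhds (fejerSum k F f x)) := by
  have hk : ∀ T, boxMean k T ⇑(fejerKernel k F x * f) = (F.card : ℂ)⁻¹ *
      ∑ a ∈ F, ∑ b ∈ F, apExp k (a - b) x * boxMean k T ⇑(apExp k (-(a - b)) * f) := fun T => by
    rw [fejerKernel, smul_mul_assoc, boxMean_smul, Finset.sum_mul, boxMean_sum]
    simp_rw [Finset.sum_mul, boxMean_sum, smul_mul_assoc, boxMean_smul]
  simp_rw [hk]
  simp only [fejerSum, BoundedContinuousFunction.coe_smul, BoundedContinuousFunction.coe_sum,
    Finset.sum_apply, smul_eq_mul]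
  refine Tendsto.const_mul _ (tendsto_finsetSum _ fun a _ => tendsto_finsetSum _ fun b _ => ?_)
  rw [mul_comm (bohrCoeff k f (a - b))]
  exact (tendsto_bohrCoeff k hf (a - b)).const_mul _

theorem norm_fejerSum_le (k : ℕ) {F : Finset (Fin k → ℝ)} (hF : F.Nonempty) {f : APB k}
    (hf : f ∈ APalg k) : ‖fejerSum k F f‖ ≤ ‖f‖ := by
  refine (BoundedContinuousFunction.norm_le (norm_nonneg _)).2 fun x => ?_
  have hone : fejerSum k F (apExp k 0) = apExp k 0 := by
    have h : (F.card : ℂ) ≠ 0 := by exact_mod_cast hF.card_pos.ne'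
    rw [fejerSum_apExp]
    simp [h]
  have h1 := (tendsto_boxMean_fejerKernel_mul k F x hf).norm
  have h2 := (tendsto_boxMean_fejerKernel_mul k F x
    ((APalg k).smul_mem (apExp_mem_APalg k 0) (‖f‖ : ℂ)))
  rw [fejerSum_smul k F (apExp_mem_APalg k 0), hone] at h2
  have h3 := (Complex.continuous_re.tendsto _).comp h2
  have h4 : (((‖f‖ : ℂ) • apExp k 0) x).re = ‖f‖ := by simp [apExp_zero]
  rw [← h4]
  refine le_of_tendsto_of_tendsto h1 h3 ?_
  filter_upwards [eventually_gt_atTop 0] with T hT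
  refine norm_boxMean_le_re k hT _ _ fun y => ?_
  rw [BoundedContinuousFunction.mul_apply, BoundedContinuousFunction.mul_apply, norm_mul,
    fejerKernel_apply, Complex.norm_real, Real.norm_of_nonneg (by positivity),
    Complex.re_ofReal_mul]
  refine mul_le_mul_of_nonneg_left ?_ (by positivity)
  simpa [apExp_zero] using f.norm_coe_le_norm y

theorem exists_norm_fejerSum_sub_le (k : ℕ) {p : APB k}
    (hp : p ∈ Submodule.span ℂ (Set.range (apExp k))) {ε : ℝ} (hε : 0 < ε) :
    ∃ F : Finset (Fin k → ℝ), F.Nonempty ∧ ‖fejerSum k F p - p‖ ≤ ε := by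
  classical
  obtain ⟨c, rfl⟩ := Finsupp.mem_span_range_iff_exists_finsupp.1 hp
  set C : ℝ := ∑ lam ∈ c.support, ‖c lam‖ with hC
  have hC0 : 0 ≤ C := Finset.sum_nonneg fun _ _ => norm_nonneg _
  obtain ⟨F, hF, hFs⟩ := exists_almost_invariant c.support (ε := ε / (C + 1)) (by positivity)
  refine ⟨F, hF, ?_⟩
  have hFc : (0 : ℝ) < F.card := by exact_mod_cast hF.card_pos
  have hdist : ∀ s : Finset (Fin k → ℝ), fejerSum k F (∑ a ∈ s, c a • apExp k a) =
      ∑ a ∈ s, c a • fejerSum k F (apExp k a) := fun s => by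
    induction s using Finset.induction_on with
    | empty =>
      have := fejerSum_smul k F (apExp_mem_APalg k 0) 0
      simpa using this
    | insert a s ha ih =>
      rw [Finset.sum_insert ha, Finset.sum_insert ha, fejerSum_add k F
        ((APalg k).smul_mem (apExp_mem_APalg k a) _)
        ((APalg k).sum_mem fun b _ => (APalg k).smul_mem (apExp_mem_APalg k b) _), ih,
        fejerSum_smul k F (apExp_mem_APalg k a)]
  rw [Finsupp.sum, hdist, ← Finset.sum_sub_distrib]
  calc ‖∑ a ∈ c.support, (c a • fejerSum k F (apExp k a) - c a • apExp k a)‖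
      ≤ ∑ a ∈ c.support, ‖c a‖ * (ε / (C + 1)) := by
        refine norm_sum_le_of_le _ fun a ha => ?_
        rw [← smul_sub, norm_smul]
        refine mul_le_mul_of_nonneg_left ?_ (norm_nonneg _)
        have h2 : ((F.filter fun b => b + a ∈ F).card : ℝ) ≤ F.card := by
          exact_mod_cast Finset.card_filter_le _ _
        have hsub : fejerSum k F (apExp k a) - apExp k a =
            (((F.card : ℝ)⁻¹ * ((F.filter fun b => b + a ∈ F).card : ℝ) - 1 : ℝ) : ℂ) •
              apExp k a := by
          rw [fejerSum_apExp]
          push_cast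
          rw [sub_smul, one_smul]
        rw [hsub, norm_smul, Complex.norm_real]
        refine (mul_le_of_le_one_right (norm_nonneg _) (norm_apExp_le k a)).trans ?_
        rw [Real.norm_eq_abs, abs_le]
        have h3 : (F.card : ℝ)⁻¹ * ((F.filter fun b => b + a ∈ F).card : ℝ) ≤ 1 := by
          rw [inv_mul_le_iff₀ hFc, mul_one]
          exact h2
        have h4 : 1 - ε / (C + 1) ≤
            (F.card : ℝ)⁻¹ * ((F.filter fun b => b + a ∈ F).card : ℝ) := by
          rw [le_inv_mul_iff₀ hFc, mul_comm]
          exact hFs a ha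
        have h5 : 0 < ε / (C + 1) := by positivity
        constructor <;> linarith
    _ = C / (C + 1) * ε := by
        rw [← Finset.sum_mul, ← hC]
        ring
    _ ≤ ε := mul_le_of_le_one_left hε.le (by
        rw [div_le_one (by positivity)]
        linarith)

/-- An almost periodic function has spectrum in `Δ` if and only if it is a uniform limit of
trigonometric polynomials with frequencies in `Δ`. -/
theorem APmem_iff_mem_apClosure (k : ℕ) (Δ : AddSubmonoid (Fin k → ℝ)) (f : APB k) :
    APmem k Δ f ↔ f ∈ apClosure k Δ := by
  rw [mem_apClosure_iff]
  constructor
  · rintro ⟨hf, hspec⟩ ε hε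
    have hf' := hf
    rw [APalg_eq_apClosure_top, mem_apClosure_iff] at hf'
    obtain ⟨q, hq, hfq⟩ := hf' (ε / 3) (by positivity)
    have hqA := APalg_of_mem_span k hq
    obtain ⟨F, hF, hFq⟩ := exists_norm_fejerSum_sub_le k (p := q) (by simpa using hq)
      (ε := ε / 4) (by positivity)
    refine ⟨fejerSum k F f, fejerSum_mem_span k F f hspec, ?_⟩
    have h1 : ‖fejerSum k F (q - f)‖ ≤ ‖f - q‖ :=
      (norm_fejerSum_le k hF ((APalg k).sub_mem hqA hf)).trans_eq (norm_sub_rev _ _)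
    have h2 : f - fejerSum k F f = (f - q) + fejerSum k F (q - f) - (fejerSum k F q - q) := by
      rw [fejerSum_sub k F hqA hf]
      abel
    rw [h2]
    have h3 := norm_sub_le (f - q + fejerSum k F (q - f)) (fejerSum k F q - q)
    have h4 := norm_add_le (f - q) (fejerSum k F (q - f))
    linarith
  · intro h
    have hf : f ∈ APalg k := by
      rw [APalg_eq_apClosure_top, mem_apClosure_iff]
      intro ε hε
      obtain ⟨p, hp, hfp⟩ := h ε hε
      exact ⟨p, Submodule.span_mono (Set.image_mono (Set.subset_univ _)) hp, hfp⟩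
    refine ⟨hf, fun lam hlam => ?_⟩
    by_contra hmem
    obtain ⟨p, hp, hfp⟩ := h _ (norm_pos_iff.2 hlam)
    have hsub := norm_bohrCoeff_le k ((APalg k).sub_mem hf (APalg_of_mem_span k hp)) lam
    rw [bohrCoeff_sub k hf (APalg_of_mem_span k hp),
      bohrCoeff_eq_zero_of_mem_span k hp hmem, sub_zero] at hsub
    linarith

/-! ### Right invertible matrices over Banach algebras -/

section MatrixUnits

variable {A : Type*} [NormedCommRing A] [CompleteSpace A] {m n : ℕ}

theorem Matrix.isOpen_isUnit :
    IsOpen {X : Matrix (Fin n) (Fin n) A | IsUnit X} := by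
  simp only [Matrix.isUnit_iff_isUnit_det]
  exact Units.isOpen.preimage (Continuous.matrix_det continuous_id)

theorem Matrix.exists_isUnit_of_norm_sub_lt :
    ∃ δ > 0, ∀ X : Matrix (Fin n) (Fin n) A,
      (∀ i j, ‖X i j - (1 : Matrix (Fin n) (Fin n) A) i j‖ < δ) → IsUnit X := by
  have h : {X : Matrix (Fin n) (Fin n) A | IsUnit X} ∈
      nhds (1 : Matrix (Fin n) (Fin n) A) := Matrix.isOpen_isUnit.mem_nhds isUnit_one
  obtain ⟨δ, hδ, hsub⟩ := (Metric.nhds_basis_ball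
    (x := (fun i j => (1 : Matrix (Fin n) (Fin n) A) i j : Fin n → Fin n → A))).mem_iff.1 h
  refine ⟨δ, hδ, fun X hX => hsub ?_⟩
  refine Metric.mem_ball.2 ((dist_pi_lt_iff hδ).2 fun i => (dist_pi_lt_iff hδ).2 fun j => ?_)
  exact (dist_eq_norm (X i j) _).trans_lt (hX i j)

/-- A right invertible matrix is equivalent to all matrices in a neighbourhood. -/
theorem Matrix.eventually_eq_mul_isUnit {M : Matrix (Fin m) (Fin n) A}
    {R : Matrix (Fin n) (Fin m) A} (h : M * R = 1) :
    ∀ᶠ N in nhds M, ∃ U : Matrix (Fin n) (Fin n) A, IsUnit U ∧ N = M * U := by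
  have hcont : Continuous fun N : Matrix (Fin m) (Fin n) A => 1 + R * (N - M) := by fun_prop
  have hmem := hcont.continuousAt.preimage_mem_nhds (x := M)
    (Matrix.isOpen_isUnit.mem_nhds (by simp))
  filter_upwards [hmem] with N hN
  refine ⟨_, hN, ?_⟩
  rw [Matrix.mul_add, ← Matrix.mul_assoc, h]
  simp

/-- The endpoints of a path of right invertible matrices are equivalent. -/
theorem Matrix.exists_isUnit_of_path {f : ℝ → Matrix (Fin m) (Fin n) A}
    (hf : ContinuousOn f (Set.Icc 0 1))
    (hinv : ∀ s ∈ Set.Icc (0 : ℝ) 1, ∃ R : Matrix (Fin n) (Fin m) A, f s * R = 1) :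
    ∃ U : Matrix (Fin n) (Fin n) A, IsUnit U ∧ f 1 = f 0 * U := by
  refine isPreconnected_Icc.induction₂
    (fun x y => ∃ U : Matrix (Fin n) (Fin n) A, IsUnit U ∧ f y = f x * U) ?_ ?_ ?_
    (Set.left_mem_Icc.2 zero_le_one) (Set.right_mem_Icc.2 zero_le_one)
  · intro x hx
    obtain ⟨R, hR⟩ := hinv x hx
    exact (hf x hx).eventually (Matrix.eventually_eq_mul_isUnit hR)
  · rintro x y z - - - ⟨U, hU, hxy⟩ ⟨V, hV, hyz⟩
    exact ⟨U * V, hU.mul hV, by rw [hyz, hxy, Matrix.mul_assoc]⟩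
  · rintro x y - - ⟨U, hU, hxy⟩
    obtain ⟨V, rfl⟩ := hU
    exact ⟨↑V⁻¹, V⁻¹.isUnit, by rw [hxy, Matrix.mul_assoc, Units.mul_inv, Matrix.mul_one]⟩

end MatrixUnits

/-- A right invertible matrix over a field can be completed to an invertible matrix. -/
theorem Matrix.exists_completion_of_field {K : Type*} [Field K] {m n : ℕ} (hmn : m ≤ n)
    {C : Matrix (Fin m) (Fin n) K} {R : Matrix (Fin n) (Fin m) K} (h : C * R = 1) :
    ∃ D : Matrix (Fin n) (Fin n) K, IsUnit D ∧ ∀ i, D (Fin.castLE hmn i) = C i := by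
  have hrow : LinearIndependent K C.row := by
    rw [← Matrix.vecMul_injective_iff]
    intro v w hvw
    have := congrArg (fun u => Matrix.vecMul u R) hvw
    simpa [Matrix.vecMul_vecMul, h] using this
  have key : ∀ q, (hq : m ≤ q) → q ≤ n → ∃ v : Fin q → (Fin n → K),
      LinearIndependent K v ∧ ∀ i, v (Fin.castLE hq i) = C i := by
    intro q hq
    induction q, hq using Nat.le_induction with
    | base => exact fun _ => ⟨C, hrow, fun i => rfl⟩
    | succ q hq ih =>
      intro hqn
      obtain ⟨v, hv, hvC⟩ := ih (by omega)
      obtain ⟨x, hx⟩ := exists_linearIndependent_snoc_of_lt_finrank hv (by simpa using hqn)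
      refine ⟨_, hx, fun i => ?_⟩
      rw [← hvC i]
      exact Fin.snoc_castSucc (α := fun _ => Fin n → K) x v (Fin.castLE hq i)
  obtain ⟨v, hv, hvC⟩ := key n hmn le_rfl
  exact ⟨v, Matrix.linearIndependent_rows_iff_isUnit.1 hv, hvC⟩

/-! ### Dilations of exponential polynomials -/

/-- Finitely many nonzero elements of a halfspace lie in an open halfspace. -/
theorem IsHalfspace.exists_pos_functional {k : ℕ} {S : Set (Fin k → ℝ)} (hS : IsHalfspace k S)
    (Λ : Finset (Fin k → ℝ)) (hΛ : ↑Λ ⊆ S) :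
    ∃ ℓ : (Fin k → ℝ) →ₗ[ℝ] ℝ, ∀ a ∈ Λ, a ≠ 0 → 0 < ℓ a := by
  have hconv : Convex ℝ (S \ {0}) := by
    rintro x ⟨hx, hx0⟩ y ⟨hy, hy0⟩ a b ha hb hab
    refine ⟨hS.add_mem _ (hS.smul_mem x hx a ha) _ (hS.smul_mem y hy b hb), fun h => ?_⟩
    have h0 : a • x + b • y = 0 := h
    have hax : a • x = 0 := by
      have : a • x ∈ S ∩ -S := by
        refine ⟨hS.smul_mem x hx a ha, Set.mem_neg.2 ?_⟩
        rw [neg_eq_of_add_eq_zero_right h0]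
        exact hS.smul_mem y hy b hb
      rwa [hS.inter] at this
    have hby : b • y = 0 := by rwa [hax, zero_add] at h0
    rcases smul_eq_zero.1 hax with h1 | h1
    · rcases smul_eq_zero.1 hby with h2 | h2
      · rw [h1, h2] at hab
        norm_num at hab
      · exact hy0 h2
    · exact hx0 h1
  have hsub : convexHull ℝ ((Λ : Set (Fin k → ℝ)) \ {0}) ⊆ S \ {0} :=
    convexHull_min (Set.sdiff_subset_sdiff_left hΛ) hconv
  obtain ⟨f, u, hu, hf⟩ := geometric_hahn_banach_point_closed (convex_convexHull ℝ _)
    ((Λ.finite_toSet.sdiff (t := {0})).isCompact_convexHull ℝ).isClosed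
    (fun h => (hsub h).2 rfl : (0 : Fin k → ℝ) ∉ convexHull ℝ ((Λ : Set (Fin k → ℝ)) \ {0}))
  refine ⟨f.toLinearMap, fun a ha ha0 => ?_⟩
  have h1 := hf a (subset_convexHull ℝ _ ⟨ha, ha0⟩)
  rw [map_zero] at hu
  exact hu.trans h1

section Dilation

variable {k : ℕ} {Γ Δ : AddSubmonoid (Fin k → ℝ)} (hΓΔ : Γ ≤ Δ) (ℓ : (Fin k → ℝ) →ₗ[ℝ] ℝ)
  (hℓ : ∀ a ∈ Γ, 0 ≤ ℓ a)

/-- The homomorphism from formal exponential polynomials to `AP^k_Δ` which multiplies the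
coefficient at `λ` by `|s| ^ ℓ λ`. -/
def apDilation (s : ℝ) : AddMonoidAlgebra ℂ Γ →ₐ[ℂ] apClosure k Δ :=
  AddMonoidAlgebra.lift ℂ (apClosure k Δ) Γ
    { toFun := fun a => ((|s| ^ ℓ a.toAdd : ℝ) : ℂ) •
        ⟨apExp k a.toAdd, apExp_mem_apClosure k Δ (hΓΔ a.toAdd.2)⟩
      map_one' := by
        ext x
        simp [apExp_zero]
      map_mul' := fun a b => by
        ext x
        simp [apExp_add, Real.rpow_add_of_nonneg (abs_nonneg s) (hℓ _ a.toAdd.2)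
          (hℓ _ b.toAdd.2)]
        ring }

theorem apDilation_single (s : ℝ) (a : Γ) (b : ℂ) :
    apDilation hΓΔ ℓ hℓ s (AddMonoidAlgebra.single a b) = b • ((|s| ^ ℓ a : ℝ) : ℂ) •
      (⟨apExp k a, apExp_mem_apClosure k Δ (hΓΔ a.2)⟩ : apClosure k Δ) := by
  rw [apDilation, AddMonoidAlgebra.lift_single]
  rfl

theorem coe_apDilation_apply (s : ℝ) (p : AddMonoidAlgebra ℂ Γ) (x : Fin k → ℝ) :
    (apDilation hΓΔ ℓ hℓ s p : APB k) x =
      ∑ a ∈ p.coeff.support, p.coeff a * apExp k a x * ((|s| ^ ℓ a : ℝ) : ℂ) := by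
  rw [apDilation, AddMonoidAlgebra.lift_apply, Finsupp.sum]
  simp only [AddSubmonoidClass.coe_finsetSum, BoundedContinuousFunction.coe_sum, Finset.sum_apply]
  refine Finset.sum_congr rfl fun a _ => ?_
  simp
  ring

theorem continuous_apDilation (p : AddMonoidAlgebra ℂ Γ) :
    Continuous fun s => apDilation hΓΔ ℓ hℓ s p := by
  induction p using AddMonoidAlgebra.induction_on with
  | of a =>
    simp only [AddMonoidAlgebra.of_apply, apDilation_single]
    have h : Continuous fun s : ℝ => |s| ^ ℓ a :=
      (Real.continuous_rpow_const (hℓ a a.2)).comp continuous_abs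
    fun_prop
  | add p q hp hq =>
    simp only [map_add]
    exact hp.add hq
  | smul c p hp =>
    simp only [map_smul]
    exact hp.const_smul c

theorem apDilation_zero (hℓ0 : ∀ a ∈ Γ, ℓ a = 0 → a = 0) (p : AddMonoidAlgebra ℂ Γ) :
    ∃ c : ℂ, apDilation hΓΔ ℓ hℓ 0 p = algebraMap ℂ (apClosure k Δ) c := by
  induction p using AddMonoidAlgebra.induction_on with
  | of a =>
    rw [AddMonoidAlgebra.of_apply, apDilation_single]
    by_cases ha : ℓ a = 0
    · refine ⟨1, Subtype.ext ?_⟩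
      simp [hℓ0 a a.2 ha, apExp_zero]
    · exact ⟨0, by simp [Real.zero_rpow ha]⟩
  | add p q hp hq =>
    obtain ⟨c, hc⟩ := hp
    obtain ⟨d, hd⟩ := hq
    exact ⟨c + d, by simp [hc, hd]⟩
  | smul c p hp =>
    obtain ⟨d, hd⟩ := hp
    exact ⟨c * d, by rw [map_smul, hd, map_mul, Algebra.smul_def]⟩

theorem apExp_apply_sub_smul (a x : Fin k → ℝ) (y : ℝ) :
    apExp k a (x - y • fun j => ℓ (Pi.single j 1)) =
      apExp k a x * Complex.exp (-((y : ℂ) * Complex.I * (ℓ a : ℂ))) := by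
  have h : ℓ a = ∑ j, a j * ℓ (Pi.single j 1) := by
    conv_lhs => rw [pi_eq_sum_univ' a]
    simp [map_sum]
  rw [apExp_apply, apExp_apply, ← Complex.exp_add, h]
  congr 1
  simp only [Pi.sub_apply, Pi.smul_apply, smul_eq_mul, mul_sub, Finset.sum_sub_distrib,
    Complex.ofReal_sub, mul_left_comm (a _) y, ← Finset.mul_sum, Complex.ofReal_mul]
  ring

theorem norm_apDilation_le {s : ℝ} (hs : s ∈ Set.Icc (0 : ℝ) 1) (p : AddMonoidAlgebra ℂ Γ) :
    ‖apDilation hΓΔ ℓ hℓ s p‖ ≤ ‖apDilation hΓΔ ℓ hℓ 1 p‖ := by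
  have hpos : ∀ s ∈ Set.Ioc (0 : ℝ) 1,
      ‖apDilation hΓΔ ℓ hℓ s p‖ ≤ ‖apDilation hΓΔ ℓ hℓ 1 p‖ := by
    rintro s ⟨hs0, hs1⟩
    refine (BoundedContinuousFunction.norm_le (norm_nonneg _)).2 fun x => ?_
    set g : ℂ → ℂ := fun z => ∑ a ∈ p.coeff.support,
      p.coeff a * apExp k a x * Complex.exp (-(z * (ℓ a : ℂ))) with hg
    have hbd : ∀ z : ℂ, 0 ≤ z.re → ‖g z‖ ≤ ∑ a ∈ p.coeff.support, ‖p.coeff a‖ := by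
      refine fun z hz => norm_sum_le_of_le _ fun a _ => ?_
      rw [norm_mul, norm_mul, norm_apExp_apply, mul_one, Complex.norm_exp]
      refine mul_le_of_le_one_right (norm_nonneg _) (Real.exp_le_one_iff.2 ?_)
      simpa using mul_nonneg hz (hℓ a a.2)
    have hgs : (apDilation hΓΔ ℓ hℓ s p : APB k) x = g ((-Real.log s : ℝ) : ℂ) := by
      rw [coe_apDilation_apply]
      refine Finset.sum_congr rfl fun a _ => ?_
      rw [abs_of_pos hs0, Real.rpow_def_of_pos hs0]
      simp
    change ‖(apDilation hΓΔ ℓ hℓ s p : APB k) x‖ ≤ _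
    rw [hgs]
    refine PhragmenLindelof.right_half_plane_of_bounded_on_real ?_ ⟨0, by norm_num, 0, ?_⟩ ?_ ?_ ?_
    · exact Differentiable.diffContOnCl (by fun_prop)
    · refine Asymptotics.IsBigO.of_bound (∑ a ∈ p.coeff.support, ‖p.coeff a‖) ?_
      filter_upwards [mem_inf_of_right (mem_principal_self _)] with z hz
      simpa using hbd z (le_of_lt hz)
    · refine isBoundedUnder_of_eventually_le (a := ∑ a ∈ p.coeff.support, ‖p.coeff a‖) ?_
      filter_upwards [eventually_ge_atTop 0] with t ht
      exact hbd t (by simpa using ht)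
    · intro y
      refine le_trans (le_of_eq ?_) ((apDilation hΓΔ ℓ hℓ 1 p : APB k).norm_coe_le_norm
        (x - y • fun j => ℓ (Pi.single j 1)))
      rw [coe_apDilation_apply]
      simp [hg, apExp_apply_sub_smul, mul_assoc]
    · simpa using Real.log_nonpos hs0.le hs1
  rcases hs.1.eq_or_lt with h0 | h0
  · subst h0
    refine le_of_tendsto (x := nhdsWithin 0 (Set.Ioi 0))
      ((continuous_apDilation hΓΔ ℓ hℓ p).norm.tendsto 0 |>.mono_left nhdsWithin_le_nhds) ?_
    filter_upwards [Ioc_mem_nhdsGT zero_lt_one] with t ht using hpos t ht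
  · exact hpos s ⟨h0, hs.2⟩

end Dilation

/-! ### Completion of right invertible matrices -/

instance completeSpace_apClosure (k : ℕ) (Δ : AddSubmonoid (Fin k → ℝ)) :
    CompleteSpace (apClosure k Δ) :=
  (Subalgebra.isClosed_topologicalClosure _).completeSpace_coe

theorem exists_apDilation_one_eq {k : ℕ} {S : Set (Fin k → ℝ)} (hS : IsHalfspace k S)
    {Δ : AddSubmonoid (Fin k → ℝ)} (hΔ : (Δ : Set (Fin k → ℝ)) ⊆ S) {ι : Type*} [Fintype ι]
    {f : ι → apClosure k Δ}
    (hf : ∀ i, (f i : APB k) ∈ Submodule.span ℂ (apExp k '' Δ)) :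
    ∃ (Γ : AddSubmonoid (Fin k → ℝ)) (hΓΔ : Γ ≤ Δ) (ℓ : (Fin k → ℝ) →ₗ[ℝ] ℝ)
      (hℓ : ∀ a ∈ Γ, 0 ≤ ℓ a), (∀ a ∈ Γ, ℓ a = 0 → a = 0) ∧
        ∀ i, ∃ p, apDilation hΓΔ ℓ hℓ 1 p = f i := by
  classical
  simp only [Finsupp.mem_span_image_iff_linearCombination, Finsupp.mem_supported] at hf
  choose c hc hcf using hf
  have hmem : ∀ a ∈ Finset.univ.biUnion fun i => (c i).support, a ∈ Δ := by
    intro a ha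
    obtain ⟨i, -, hi⟩ := Finset.mem_biUnion.1 ha
    exact hc i hi
  obtain ⟨ℓ, hℓ⟩ := hS.exists_pos_functional (Finset.univ.biUnion fun i => (c i).support)
    fun a ha => hΔ (hmem a ha)
  let Γ : AddSubmonoid (Fin k → ℝ) :=
    { carrier := {a | a ∈ Δ ∧ (a = 0 ∨ 0 < ℓ a)}
      zero_mem' := ⟨Δ.zero_mem, Or.inl rfl⟩
      add_mem' := by
        rintro a b ⟨ha, ha'⟩ ⟨hb, hb'⟩
        refine ⟨Δ.add_mem ha hb, ?_⟩
        rcases ha' with rfl | ha' <;> rcases hb' with rfl | hb'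
        · simp
        · exact Or.inr (by simpa using hb')
        · exact Or.inr (by simpa using ha')
        · exact Or.inr (by simpa using add_pos ha' hb') }
  have hΓΔ : Γ ≤ Δ := fun a ha => ha.1
  have hnonneg : ∀ a ∈ Γ, 0 ≤ ℓ a := by
    rintro a ⟨-, rfl | ha⟩
    · simp
    · exact ha.le
  refine ⟨Γ, hΓΔ, ℓ, hnonneg, ?_, fun i => ?_⟩
  · rintro a ⟨-, ha | ha⟩ h0
    · exact ha
    · exact absurd h0 ha.ne'
  · have hΓ : ∀ a ∈ (c i).support, a ∈ Γ := fun a ha => by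
      refine ⟨hc i ha, or_iff_not_imp_left.2 fun h0 => hℓ a ?_ h0⟩
      exact Finset.mem_biUnion.2 ⟨i, Finset.mem_univ i, ha⟩
    refine ⟨∑ a ∈ (c i).support.attach,
      AddMonoidAlgebra.single (⟨a, hΓ a a.2⟩ : Γ) (c i a), Subtype.ext ?_⟩
    rw [← hcf i, Finsupp.linearCombination_apply, Finsupp.sum, ← Finset.sum_attach (c i).support, map_sum]
    simp [apDilation_single]

theorem dense_exponential_polynomials (k : ℕ) (Δ : AddSubmonoid (Fin k → ℝ)) :
    Dense {a : apClosure k Δ | (a : APB k) ∈ Submodule.span ℂ (apExp k '' Δ)} := by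
  intro a
  rw [Metric.mem_closure_iff]
  intro ε hε
  obtain ⟨p, hp, hap⟩ := (mem_apClosure_iff k Δ a).1 a.2 ε hε
  have hp' : p ∈ apClosure k Δ := by
    refine Subalgebra.le_topologicalClosure _ ?_
    rwa [← Subalgebra.mem_toSubmodule, adjoin_apExp_eq_span]
  exact ⟨⟨p, hp'⟩, hp, by rwa [Subtype.dist_eq, dist_eq_norm]⟩

theorem dense_exponential_polynomial_matrices (k : ℕ) (Δ : AddSubmonoid (Fin k → ℝ)) (m n : ℕ) :
    Dense {M : Matrix (Fin m) (Fin n) (apClosure k Δ) |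
      ∀ i j, (M i j : APB k) ∈ Submodule.span ℂ (apExp k '' Δ)} := by
  have h := dense_pi (Set.univ : Set (Fin m)) fun _ _ =>
    dense_pi (Set.univ : Set (Fin n)) fun _ _ => dense_exponential_polynomials k Δ
  refine h.mono fun M hM i j => ?_
  exact hM i trivial j trivial

/-- Right invertible matrices over `AP^k_Δ`, with `Δ` contained in a halfspace, can be completed
to invertible square matrices. -/
theorem exists_invertible_completion {k : ℕ} {S : Set (Fin k → ℝ)} (hS : IsHalfspace k S)
    {Δ : AddSubmonoid (Fin k → ℝ)} (hΔ : (Δ : Set (Fin k → ℝ)) ⊆ S) {m n : ℕ} (hmn : m ≤ n)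
    {M : Matrix (Fin m) (Fin n) (apClosure k Δ)} {R : Matrix (Fin n) (Fin m) (apClosure k Δ)}
    (h : M * R = 1) :
    ∃ N : Matrix (Fin n) (Fin n) (apClosure k Δ), IsUnit N ∧
      ∀ i j, N (Fin.castLE hmn i) j = M i j := by
  obtain ⟨δ, hδ, hunit⟩ := Matrix.exists_isUnit_of_norm_sub_lt (A := apClosure k Δ) (n := m)
  have hclose : ∀ᶠ z : Matrix (Fin m) (Fin n) (apClosure k Δ) ×
      Matrix (Fin n) (Fin m) (apClosure k Δ) in nhds (M, R),
      ∀ i j, ‖(z.1 * z.2) i j - (1 : Matrix (Fin m) (Fin m) (apClosure k Δ)) i j‖ < δ := by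
    refine eventually_all.2 fun i => eventually_all.2 fun j => ?_
    have hcont : Continuous fun z : Matrix (Fin m) (Fin n) (apClosure k Δ) ×
        Matrix (Fin n) (Fin m) (apClosure k Δ) =>
        ‖(z.1 * z.2) i j - (1 : Matrix (Fin m) (Fin m) (apClosure k Δ)) i j‖ := by
      refine ((Continuous.matrix_elem ?_ i j).sub continuous_const).norm
      exact continuous_fst.matrix_mul continuous_snd
    exact hcont.continuousAt.eventually_lt continuousAt_const (by simpa [h] using hδ)
  have hequiv := (Matrix.eventually_eq_mul_isUnit h).prod_inl_nhds R
  have hfreq := mem_closure_iff_frequently.1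
    (((dense_exponential_polynomial_matrices k Δ m n).prod
      (dense_exponential_polynomial_matrices k Δ n m)) (M, R))
  obtain ⟨⟨P, Q⟩, ⟨hP, hQ⟩, hPQ, U, hU, hMU⟩ := (hfreq.and_eventually (hclose.and hequiv)).exists
  obtain ⟨Γ, hΓΔ, ℓ, hℓ, hℓ0, hlift⟩ := exists_apDilation_one_eq hS hΔ
    (f := Sum.elim (fun z : Fin m × Fin n => P z.1 z.2) fun z : Fin n × Fin m => Q z.1 z.2)
    (by rintro (z | z); exacts [hP z.1 z.2, hQ z.1 z.2])
  choose p hp using fun i j => hlift (Sum.inl (i, j))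
  choose q hq using fun i j => hlift (Sum.inr (i, j))
  let Φ := fun s => (Matrix.of p).map (apDilation hΓΔ ℓ hℓ s)
  have hΦ1 : Φ 1 = P := by
    ext1 i j
    exact hp i j
  have hΨ1 : (Matrix.of q).map (apDilation hΓΔ ℓ hℓ 1) = Q := by
    ext1 i j
    exact hq i j
  have hΦcont : Continuous Φ :=
    continuous_matrix fun i j => continuous_apDilation hΓΔ ℓ hℓ (p i j)
  have hΦinv : ∀ s ∈ Set.Icc (0 : ℝ) 1,
      ∃ L : Matrix (Fin n) (Fin m) (apClosure k Δ), Φ s * L = 1 := by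
    intro s hs
    have hmap : ∀ t, Φ t * (Matrix.of q).map (apDilation hΓΔ ℓ hℓ t) - 1 =
        (Matrix.of p * Matrix.of q - 1).map (apDilation hΓΔ ℓ hℓ t) := fun t => by
      rw [Matrix.map_sub _ (map_sub _), Matrix.map_mul, Matrix.map_one _ (map_zero _) (map_one _)]
    obtain ⟨V, hV⟩ := hunit (Φ s * (Matrix.of q).map (apDilation hΓΔ ℓ hℓ s)) fun i j => by
      have h1 := congrFun (congrFun (hmap s) i) j
      have h2 := congrFun (congrFun (hmap 1) i) j
      rw [hΦ1, hΨ1] at h2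
      refine lt_of_le_of_lt ?_ (hPQ i j)
      rw [← Matrix.sub_apply, ← Matrix.sub_apply, h1, h2]
      exact norm_apDilation_le hΓΔ ℓ hℓ hs _
    exact ⟨(Matrix.of q).map (apDilation hΓΔ ℓ hℓ s) * V⁻¹.val, by
      rw [← Matrix.mul_assoc, ← hV, Units.mul_inv]⟩
  obtain ⟨W, hW, hPW⟩ := Matrix.exists_isUnit_of_path hΦcont.continuousOn hΦinv
  choose C hC using fun i j => apDilation_zero hΓΔ ℓ hℓ hℓ0 (p i j)
  have hΦ0 : Φ 0 = (Matrix.of C).map (algebraMap ℂ (apClosure k Δ)) := by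
    ext1 i j
    exact hC i j
  obtain ⟨L, hL⟩ := hΦinv 0 (Set.left_mem_Icc.2 zero_le_one)
  let ev : apClosure k Δ →ₐ[ℂ] ℂ :=
    { toFun := fun a => (a : APB k) 0
      map_one' := rfl
      map_mul' := fun _ _ => rfl
      map_zero' := rfl
      map_add' := fun _ _ => rfl
      commutes' := fun c => by simp }
  have hCinv : Matrix.of C * L.map ev = 1 := by
    have := congrArg (fun X => X.map ev) hL
    simp only [Matrix.map_mul, hΦ0, Matrix.map_map] at this
    rw [Matrix.map_one _ (map_zero _) (map_one _)] at this
    convert this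
    ext i j
    simp
  obtain ⟨D, hD, hDC⟩ := Matrix.exists_completion_of_field hmn hCinv
  obtain ⟨U, rfl⟩ := hU
  have hMW : M = (Matrix.of C).map (algebraMap ℂ (apClosure k Δ)) * (W * U⁻¹.val) := by
    rw [← Matrix.mul_assoc, ← hΦ0, ← hPW, hΦ1]
    change P = M * _ at hMU
    rw [hMU, Matrix.mul_assoc, Units.mul_inv, Matrix.mul_one]
  refine ⟨D.map (algebraMap ℂ (apClosure k Δ)) * (W * U⁻¹.val),
    (hD.map (algebraMap ℂ (apClosure k Δ)).mapMatrix).mul (hW.mul U⁻¹.isUnit), fun i j => ?_⟩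
  rw [hMW, Matrix.mul_apply, Matrix.mul_apply]
  simp [hDC]

/-! ### Augmentation of rectangular factorizations -/

theorem APmem.mono {k : ℕ} {Δ Δ' : Set (Fin k → ℝ)} {f : APB k} (h : APmem k Δ f)
    (hsub : Δ ⊆ Δ') : APmem k Δ' f :=
  ⟨h.1, h.2.trans hsub⟩

theorem IsHalfspace.neg {k : ℕ} {S : Set (Fin k → ℝ)} (hS : IsHalfspace k S) :
    IsHalfspace k (-S) where
  union := by rw [neg_neg, Set.union_comm, hS.union]
  inter := by rw [neg_neg, Set.inter_comm, hS.inter]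
  add_mem x hx y hy := by
    rw [Set.mem_neg, neg_add]
    exact hS.add_mem _ hx _ hy
  smul_mem x hx a ha := by
    rw [Set.mem_neg, ← smul_neg]
    exact hS.smul_mem _ hx a ha

/-- A halfspace as an additive submonoid. -/
def IsHalfspace.toAddSubmonoid {k : ℕ} {S : Set (Fin k → ℝ)} (hS : IsHalfspace k S) :
    AddSubmonoid (Fin k → ℝ) where
  carrier := S
  zero_mem' := by
    have h : (0 : Fin k → ℝ) ∈ S ∩ -S := by
      rw [hS.inter]
      rfl
    exact h.1
  add_mem' hx hy := hS.add_mem _ hx _ hy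

/-- Right invertible matrices over `AP^k_{Σ ∩ S}` can be completed to invertible matrices by
adding rows. -/
theorem IsHalfspace.exists_row_completion {k : ℕ} {S : Set (Fin k → ℝ)} (hS : IsHalfspace k S)
    (Sg : AddSubgroup (Fin k → ℝ)) {m n : ℕ} (hmn : m ≤ n)
    {M : Matrix (Fin m) (Fin n) (APB k)} {R : Matrix (Fin n) (Fin m) (APB k)}
    (hM : ∀ i j, APmem k (↑Sg ∩ S) (M i j)) (hR : ∀ i j, APmem k (↑Sg ∩ S) (R i j))
    (h : M * R = 1) :
    ∃ N N' : Matrix (Fin n) (Fin n) (APB k),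
      (∀ i j, APmem k (↑Sg ∩ S) (N i j)) ∧ (∀ i j, APmem k (↑Sg ∩ S) (N' i j)) ∧
      N * N' = 1 ∧ ∀ i j, N (Fin.castLE hmn i) j = M i j := by
  let Δ := Sg.toAddSubmonoid ⊓ hS.toAddSubmonoid
  have hmem : ∀ f, APmem k (↑Sg ∩ S) f ↔ f ∈ apClosure k Δ := APmem_iff_mem_apClosure k Δ
  simp only [hmem] at hM hR ⊢
  let ι := (apClosure k Δ).val
  have hinj : Function.Injective ι := Subtype.val_injective
  obtain ⟨N, ⟨U, rfl⟩, hN⟩ := exists_invertible_completion hS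
    (Δ := Δ) Set.inter_subset_right hmn
    (M := Matrix.of fun i j => ⟨M i j, hM i j⟩) (R := Matrix.of fun i j => ⟨R i j, hR i j⟩) (by
      refine Matrix.map_injective hinj ?_
      dsimp only
      rw [Matrix.map_mul, Matrix.map_one _ (map_zero _) (map_one _)]
      exact h)
  refine ⟨U.val.map ι, U⁻¹.val.map ι, fun i j => (U.val i j).2, fun i j => (U⁻¹.val i j).2,
    ?_, fun i j => congrArg ι (hN i j)⟩
  rw [← Matrix.map_mul, Units.mul_inv, Matrix.map_one _ (map_zero _) (map_one _)]

theorem IsAPFactorization.APmem_apply {k m n p : ℕ} {S : Set (Fin k → ℝ)}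
    {Sg : AddSubgroup (Fin k → ℝ)} {G : Matrix (Fin m) (Fin n) (APB k)}
    {lam : Fin p → (Fin k → ℝ)} {Gp : Matrix (Fin m) (Fin p) (APB k)}
    {Gm : Matrix (Fin p) (Fin n) (APB k)} (h : IsAPFactorization k S (↑Sg) G lam Gp Gm)
    (i : Fin m) (j : Fin n) : APmem k (↑Sg) (G i j) := by
  obtain ⟨hp, hm, hlam, -, -, rfl⟩ := h
  have hmem : ∀ f, APmem k (↑Sg) f ↔ f ∈ apClosure k Sg.toAddSubmonoid :=
    APmem_iff_mem_apClosure k Sg.toAddSubmonoid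
  rw [hmem, Matrix.mul_apply]
  refine Subalgebra.sum_mem _ fun l _ => ?_
  rw [Matrix.mul_diagonal]
  exact Subalgebra.mul_mem _ (Subalgebra.mul_mem _
    ((hmem _).1 ((hp i l).mono Set.inter_subset_left)) (apExp_mem_apClosure k _ (hlam l)))
    ((hmem _).1 ((hm l j).mono Set.inter_subset_left))

/-- **Theorem 4.2.**  Let `S ⊂ ℝ^k` be a halfspace, `Σ` an additive subgroup
of `ℝ^k`, and `G ∈ (AP^k_Σ)^{m×n}`.  If `m < n` (resp. `m > n`), then `G`
admits a left `(AP_S)_Σ` factorization with indices `λ_1, …, λ_p`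
(`p = max{m,n}`) if and only if `G` can be augmented by `n - m` rows
(resp. `m - n` columns) with entries in `AP^k_Σ` to a square `p × p` matrix
function admitting a left `(AP_S)_Σ` factorization with the same indices.
(In particular, taking all indices `0`, `G` admits a canonical `(AP_S)_Σ`
factorization iff it can be augmented to a square matrix function admitting a
canonical `(AP_S)_Σ` factorization.) -/
theorem rectangular_factorization_iff_augmentation (k : ℕ)
    (S : Set (Fin k → ℝ)) (hS : IsHalfspace k S)
    (Sg : AddSubgroup (Fin k → ℝ)) :
    (∀ (m n : ℕ) (hmn : m < n) (G : Matrix (Fin m) (Fin n) (APB k)),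
      (∀ i j, APmem k (↑Sg) (G i j)) →
      ∀ lam : Fin n → (Fin k → ℝ),
        (∃ Gp Gm, IsAPFactorization k S (↑Sg) G lam Gp Gm) ↔
        (∃ F : Matrix (Fin n) (Fin n) (APB k),
          (∀ i j, APmem k (↑Sg) (F i j)) ∧
          (∀ (i : Fin m) (j : Fin n), F (Fin.castLE hmn.le i) j = G i j) ∧
          ∃ Fp Fm, IsAPFactorization k S (↑Sg) F lam Fp Fm)) ∧
    (∀ (m n : ℕ) (hnm : n < m) (G : Matrix (Fin m) (Fin n) (APB k)),
      (∀ i j, APmem k (↑Sg) (G i j)) →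
      ∀ lam : Fin m → (Fin k → ℝ),
        (∃ Gp Gm, IsAPFactorization k S (↑Sg) G lam Gp Gm) ↔
        (∃ F : Matrix (Fin m) (Fin m) (APB k),
          (∀ i j, APmem k (↑Sg) (F i j)) ∧
          (∀ (i : Fin m) (j : Fin n), F i (Fin.castLE hnm.le j) = G i j) ∧
          ∃ Fp Fm, IsAPFactorization k S (↑Sg) F lam Fp Fm)) := by
  refine ⟨fun m n hmn G _ lam => ⟨?_, ?_⟩, fun m n hnm G _ lam => ⟨?_, ?_⟩⟩
  · rintro ⟨Gp, Gm, hp, hm, hlam, ⟨Gpr, hpr, hGpr⟩, hleft, rfl⟩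
    obtain ⟨Fp, Fpr, hFp, hFpr, hinv, hrows⟩ :=
      hS.exists_row_completion Sg hmn.le hp hpr hGpr
    have hF : IsAPFactorization k S (↑Sg)
        (Fp * Matrix.diagonal (fun j => apExp k (lam j)) * Gm) lam Fp Gm :=
      ⟨hFp, hm, hlam, ⟨Fpr, hFpr, hinv⟩, hleft, rfl⟩
    refine ⟨_, hF.APmem_apply, fun i j => ?_, Fp, Gm, hF⟩
    simp only [Matrix.mul_apply, hrows]
  · rintro ⟨F, -, hFG, Fp, Fm, hp, hm, hlam, ⟨Fpr, hpr, hFpr⟩, hleft, rfl⟩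
    refine ⟨Fp.submatrix (Fin.castLE hmn.le) id, Fm, fun i j => hp _ _, hm, hlam,
      ⟨Fpr.submatrix id (Fin.castLE hmn.le), fun i j => hpr _ _, ?_⟩, hleft, ?_⟩
    · rw [← Matrix.submatrix_mul _ _ _ _ _ Function.bijective_id, hFpr,
        Matrix.submatrix_one _ (Fin.castLE_injective hmn.le)]
    · ext1 i j
      rw [← hFG i j]
      simp only [Matrix.mul_apply, Matrix.submatrix_apply, id]
  · rintro ⟨Gp, Gm, hp, hm, hlam, hright, ⟨Gml, hml, hGml⟩, rfl⟩
    obtain ⟨N, N', hN, hN', hinv, hcols⟩ :=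
      hS.neg.exists_row_completion Sg hnm.le (M := Gm.transpose) (R := Gml.transpose)
        (fun i j => hm j i) (fun i j => hml j i)
        (by rw [← Matrix.transpose_mul, hGml, Matrix.transpose_one])
    have hF : IsAPFactorization k S (↑Sg)
        (Gp * Matrix.diagonal (fun j => apExp k (lam j)) * N.transpose) lam Gp N.transpose :=
      ⟨hp, fun i j => hN j i, hlam, hright, ⟨N'.transpose, fun i j => hN' j i,
        by rw [← Matrix.transpose_mul, hinv, Matrix.transpose_one]⟩, rfl⟩
    refine ⟨_, hF.APmem_apply, fun i j => ?_, Gp, N.transpose, hF⟩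
    simp only [Matrix.mul_apply, Matrix.transpose_apply, hcols]
  · rintro ⟨F, -, hFG, Fp, Fm, hp, hm, hlam, hright, ⟨Fml, hml, hFml⟩, rfl⟩
    refine ⟨Fp, Fm.submatrix id (Fin.castLE hnm.le), hp, fun i j => hm _ _, hlam, hright,
      ⟨Fml.submatrix (Fin.castLE hnm.le) id, fun i j => hml _ _, ?_⟩, ?_⟩
    · rw [← Matrix.submatrix_mul _ _ _ _ _ Function.bijective_id, hFml,
        Matrix.submatrix_one _ (Fin.castLE_injective hnm.le)]
    · ext1 i j
      rw [← hFG i j]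
      simp only [Matrix.mul_apply, Matrix.submatrix_apply, id]
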